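/- Let α ∈ (0,1) and λ > 0. For every t > 0, the Caputo fractional derivative of order α of the function f(s) = E_α(−λ s^α) satisfies the eigenvalue identity (1/Γ(1−α)) ∫_0^t (t−s)^(−α) f′(s) ds = −λ E_α(−λ t^α), where f′ denotes the derivative of s ↦ E_α(−λ s^α). -/

import Mathlib

/-- The Mittag-Leffler function `E_α(x) = ∑_{k=0}^∞ x^k / Γ(αk + 1)`. -/
noncomputable def mittagLeffler (α x : ℝ) : ℝ :=
  ∑' k : ℕ, x ^ k / Real.Gamma (α * k + 1)

/-- The Caputo fractional derivative of order `α` at `t`: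
`(1/Γ(1−α)) ∫_0^t (t−s)^(−α) f′(s) ds`. -/
noncomputable def caputoDeriv (α : ℝ) (f : ℝ → ℝ) (t : ℝ) : ℝ :=
  (1 / Real.Gamma (1 - α)) * ∫ s in (0:ℝ)..t, (t - s) ^ (-α) * deriv f s

/-!
Differentiating the series termwise gives `f'(s) = c * s ^ (α - 1) * E_{α,α}(c * s ^ α)` for
`f(s) = E_α(c * s ^ α)`, and the Caputo derivative of order `α` is the Riemann–Liouville integral
of order `1 - α` of `f'`. By the beta integral, the Riemann–Liouville integral of order `γ` maps
`s ^ (β - 1) * E_{α,β}(c * s ^ α)` to `t ^ (β + γ - 1) * E_{α,β+γ}(c * t ^ α)`. For `β = α` and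
`γ = 1 - α` the power of `t` disappears and `E_{α,1} = E_α` remains.
-/

open MeasureTheory Set Real
open ProbabilityTheory (beta beta_pos)

theorem hasDerivAt_tsum_mul_pow {𝕜 : Type*} [RCLike 𝕜] {a : ℕ → 𝕜}
    (ha : ∀ x, Summable fun k ↦ a k * x ^ k) (x : 𝕜) :
    HasDerivAt (fun y ↦ ∑' k, a k * y ^ k) (∑' k, a (k + 1) * ((k + 1) * x ^ k)) x := by
  set R : ℝ := ‖x‖ + 1
  have hR : 1 ≤ R := le_add_of_nonneg_left (norm_nonneg x)
  have hx : x ∈ Metric.ball 0 R := mem_ball_zero_iff.2 (lt_add_one _)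
  have hbound : ∀ k, ∀ y ∈ Metric.ball (0 : 𝕜) R,
      ‖a k * (k * y ^ (k - 1))‖ ≤ ‖a k * ((2 * R : ℝ) : 𝕜) ^ k‖ := by
    intro k y hy
    have hy' : ‖y‖ ≤ R := (mem_ball_zero_iff.1 hy).le
    have hpow : ‖y‖ ^ (k - 1) ≤ R ^ k :=
      (pow_le_pow_left₀ (norm_nonneg y) hy' _).trans (pow_le_pow_right₀ hR (Nat.sub_le k 1))
    have hk : (k : ℝ) ≤ 2 ^ k := mod_cast Nat.lt_two_pow_self.le
    rw [norm_mul, norm_mul, norm_mul, norm_pow, norm_pow, RCLike.norm_natCast,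
      RCLike.norm_of_nonneg (by positivity), mul_pow]
    gcongr
  have hsum : Summable fun k ↦ a k * (k * x ^ (k - 1)) :=
    .of_norm_bounded (ha _).norm fun k ↦ hbound k x hx
  have hderiv := hasDerivAt_tsum_of_isPreconnected (ha _).norm Metric.isOpen_ball
    (convex_ball (0 : 𝕜) R).isPreconnected
    (fun k y _ ↦ (hasDerivAt_pow k y).const_mul (a k)) hbound hx (ha x) hx
  simpa [hsum.tsum_eq_zero_add] using hderiv

theorem rpow_mul_exp_neg_le_Gamma {M y : ℝ} (hM : 0 ≤ M) (hy : 1 ≤ y) :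
    M ^ (y - 1) * exp (-M) ≤ Gamma y := by
  have hconv := GammaIntegral_convergent (zero_lt_one.trans_le hy)
  have hsub : Ioi M ⊆ Ioi 0 := Ioi_subset_Ioi hM
  calc
    M ^ (y - 1) * exp (-M) = ∫ x in Ioi M, M ^ (y - 1) * exp (-x) := by
      rw [integral_const_mul, integral_exp_neg_Ioi]
    _ ≤ ∫ x in Ioi M, exp (-x) * x ^ (y - 1) := by
      refine setIntegral_mono_on ((integrableOn_exp_neg_Ioi M).const_mul _) (hconv.mono_set hsub)
        measurableSet_Ioi fun x hx ↦ ?_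
      rw [mul_comm]
      gcongr
      exact (mem_Ioi.1 hx).le
    _ ≤ ∫ x in Ioi 0, exp (-x) * x ^ (y - 1) := by
      refine setIntegral_mono_set hconv ?_ hsub.eventuallyLE
      filter_upwards [ae_restrict_mem measurableSet_Ioi] with x hx
      exact mul_nonneg (exp_pos _).le (rpow_nonneg (mem_Ioi.1 hx).le _)
    _ = Gamma y := (Gamma_eq_integral (zero_lt_one.trans_le hy)).symm

section MittagLeffler

variable {α : ℝ}

/-- The two-parameter Mittag-Leffler function `E_{α,β}(x) = ∑_{k=0}^∞ x^k / Γ(αk + β)`, which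
expresses the derivative of `E_α = E_{α,1}`. Since `Real.Gamma` is `0` at its poles and `x / 0 = 0`,
the terms with `αk + β` a nonpositive integer are `0`, in accordance with `1 / Γ = 0` there. -/
noncomputable def mittagLeffler₂ (α β x : ℝ) : ℝ :=
  ∑' k : ℕ, x ^ k / Gamma (α * k + β)

theorem mittagLeffler₂_one_right (α : ℝ) : mittagLeffler₂ α 1 = mittagLeffler α :=
  rfl

theorem summable_pow_div_Gamma (hα : 0 < α) (β x : ℝ) :
    Summable fun k : ℕ ↦ x ^ k / Gamma (α * k + β) := by
  -- In `M ^ (y - 1) * exp (-M) ≤ Γ(y)`, choose `M` with `M ^ α = c > |x|`: the series is then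
  -- eventually dominated by a geometric one of ratio `|x| / c`.
  set c : ℝ := |x| + 1
  set M : ℝ := c ^ α⁻¹
  have hc : 0 < c := by positivity
  have hM : 0 < M := by positivity
  have hMα : M ^ α = c := rpow_inv_rpow hc.le hα.ne'
  have hratio : |x| / c < 1 := (div_lt_one hc).2 (lt_add_one _)
  have hgeom : Summable fun k : ℕ ↦ exp M / M ^ (β - 1) * (|x| / c) ^ k :=
    (summable_geometric_of_lt_one (by positivity) hratio).mul_left _
  have hlarge : ∀ᶠ k : ℕ in Filter.atTop, 1 ≤ α * k + β :=
    (Filter.tendsto_atTop_add_const_right _ β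
      (tendsto_natCast_atTop_atTop.const_mul_atTop hα)).eventually_ge_atTop 1
  refine .of_norm_bounded_eventually_nat hgeom ?_
  filter_upwards [hlarge] with k hk
  have hΓ : c ^ k * M ^ (β - 1) * exp (-M) ≤ Gamma (α * k + β) := by
    have hpow : M ^ (α * k + β - 1) = c ^ k * M ^ (β - 1) := by
      rw [add_sub_assoc, rpow_add hM, rpow_mul hM.le, hMα, rpow_natCast]
    simpa only [hpow] using rpow_mul_exp_neg_le_Gamma hM.le hk
  calc
    ‖x ^ k / Gamma (α * k + β)‖ = |x| ^ k / Gamma (α * k + β) := by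
      rw [norm_div, norm_pow, norm_eq_abs, norm_of_nonneg (Gamma_nonneg_of_nonneg (by linarith))]
    _ ≤ |x| ^ k / (c ^ k * M ^ (β - 1) * exp (-M)) := by gcongr
    _ = exp M / M ^ (β - 1) * (|x| / c) ^ k := by rw [exp_neg, div_pow]; field_simp

theorem hasDerivAt_mittagLeffler (hα : 0 < α) (x : ℝ) :
    HasDerivAt (mittagLeffler α) (mittagLeffler₂ α α x / α) x := by
  have hsum (y : ℝ) : Summable fun k : ℕ ↦ (Gamma (α * k + 1))⁻¹ * y ^ k := by
    simpa only [div_eq_inv_mul] using summable_pow_div_Gamma hα 1 y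
  have hcoeff (k : ℕ) :
      (Gamma (α * (k + 1 : ℕ) + 1))⁻¹ * ((k + 1) * x ^ k) = x ^ k / Gamma (α * k + α) / α := by
    have hpos : 0 < α * k + α := by positivity
    rw [Nat.cast_add_one, mul_add_one, Gamma_add_one hpos.ne']
    field_simp
  have hderiv := hasDerivAt_tsum_mul_pow hsum x
  simp only [hcoeff, ← div_eq_inv_mul, tsum_div_const] at hderiv
  exact hderiv

theorem hasDerivAt_mittagLeffler_const_mul_rpow (hα : 0 < α) (c : ℝ) {s : ℝ} (hs : 0 < s) :
    HasDerivAt (fun s ↦ mittagLeffler α (c * s ^ α))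
      (c * (s ^ (α - 1) * mittagLeffler₂ α α (c * s ^ α))) s := by
  refine ((hasDerivAt_mittagLeffler hα (c * s ^ α)).comp s
    ((hasDerivAt_rpow_const (p := α) (.inl hs.ne')).const_mul c)).congr_deriv ?_
  field_simp

end MittagLeffler

theorem integral_sub_rpow_mul_rpow {β γ t : ℝ} (hβ : 0 < β) (hγ : 0 < γ) (ht : 0 < t) :
    ∫ s in (0 : ℝ)..t, (t - s) ^ (γ - 1) * s ^ (β - 1) = beta β γ * t ^ (β + γ - 1) := by
  have hcomplex : ∫ s in (0 : ℝ)..t, (((t - s) ^ (γ - 1) * s ^ (β - 1) : ℝ) : ℂ) =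
      ∫ s in (0 : ℝ)..t, (s : ℂ) ^ ((β : ℂ) - 1) * ((t : ℂ) - s) ^ ((γ : ℂ) - 1) := by
    refine intervalIntegral.integral_congr_Ioo_of_le ht.le fun s hs ↦ ?_
    push_cast [Complex.ofReal_cpow (sub_nonneg.2 hs.2.le), Complex.ofReal_cpow hs.1.le]
    ring
  apply Complex.ofReal_injective
  rw [← intervalIntegral.integral_ofReal, hcomplex, Complex.betaIntegral_scaled _ _ ht,
    Complex.betaIntegral_eq_Gamma_mul_div _ _ (by simpa) (by simpa), beta]
  push_cast [Complex.ofReal_cpow ht.le, ← Complex.Gamma_ofReal]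
  ring

theorem intervalIntegrable_sub_rpow_mul_rpow {β γ t : ℝ} (hβ : 0 < β) (hγ : 0 < γ) (ht : 0 < t) :
    IntervalIntegrable (fun s ↦ (t - s) ^ (γ - 1) * s ^ (β - 1)) volume 0 t := by
  refine not_imp_comm.1 intervalIntegral.integral_undef ?_
  rw [integral_sub_rpow_mul_rpow hβ hγ ht]
  exact (mul_pos (beta_pos hβ hγ) (rpow_pos_of_pos ht _)).ne'

section RiemannLiouville

variable {β γ t : ℝ}

/-- The Riemann–Liouville fractional integral of order `γ` with base point `0`, at `t`:
`(1/Γ(γ)) ∫_0^t (t−s)^(γ−1) f(s) ds`. -/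
noncomputable def riemannLiouville (γ : ℝ) (f : ℝ → ℝ) (t : ℝ) : ℝ :=
  1 / Gamma γ * ∫ s in (0 : ℝ)..t, (t - s) ^ (γ - 1) * f s

theorem caputoDeriv_eq_riemannLiouville_deriv (α : ℝ) (f : ℝ → ℝ) (t : ℝ) :
    caputoDeriv α f t = riemannLiouville (1 - α) (deriv f) t := by
  rw [caputoDeriv, riemannLiouville, sub_sub_cancel_left]

theorem riemannLiouville_congr {f g : ℝ → ℝ} (γ : ℝ) (ht : 0 ≤ t) (h : EqOn f g (Ioo 0 t)) :
    riemannLiouville γ f t = riemannLiouville γ g t := by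
  rw [riemannLiouville, riemannLiouville]
  congr 1
  exact intervalIntegral.integral_congr_Ioo_of_le ht fun s hs ↦ by simp only [h hs]

theorem riemannLiouville_const_mul (γ c : ℝ) (f : ℝ → ℝ) (t : ℝ) :
    riemannLiouville γ (fun s ↦ c * f s) t = c * riemannLiouville γ f t := by
  simp only [riemannLiouville, mul_left_comm _ c, intervalIntegral.integral_const_mul]

theorem riemannLiouville_rpow (hβ : 0 < β) (hγ : 0 < γ) (ht : 0 < t) :
    riemannLiouville γ (fun s ↦ s ^ (β - 1)) t =
      Gamma β / Gamma (β + γ) * t ^ (β + γ - 1) := by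
  have hΓ := (Gamma_pos_of_pos hγ).ne'
  rw [riemannLiouville, integral_sub_rpow_mul_rpow hβ hγ ht, beta]
  field_simp

theorem riemannLiouville_tsum {ι : Type*} [Countable ι] {f : ι → ℝ → ℝ} (hγ : 0 < γ) (ht : 0 ≤ t)
    (hint : ∀ i, IntervalIntegrable (fun s ↦ (t - s) ^ (γ - 1) * f i s) volume 0 t)
    (hsum : Summable fun i ↦ riemannLiouville γ (fun s ↦ |f i s|) t) :
    riemannLiouville γ (fun s ↦ ∑' i, f i s) t = ∑' i, riemannLiouville γ (f i) t := by
  have hnorm (i : ι) : ∫ s in Ioc 0 t, ‖(t - s) ^ (γ - 1) * f i s‖ =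
      Gamma γ * riemannLiouville γ (fun s ↦ |f i s|) t := by
    rw [riemannLiouville, one_div, mul_inv_cancel_left₀ (Gamma_pos_of_pos hγ).ne',
      intervalIntegral.integral_of_le ht]
    refine setIntegral_congr_fun measurableSet_Ioc fun s hs ↦ ?_
    simp only [norm_mul, norm_eq_abs, abs_rpow_of_nonneg (sub_nonneg.2 hs.2),
      abs_of_nonneg (sub_nonneg.2 hs.2)]
  have hswap := hasSum_integral_of_summable_integral_norm (fun i ↦ (hint i).1)
    ((hsum.mul_left (Gamma γ)).congr fun i ↦ (hnorm i).symm)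
  simp only [riemannLiouville, intervalIntegral.integral_of_le ht, tsum_mul_left, hswap.tsum_eq]

theorem riemannLiouville_tsum_mul_rpow {ι : Type*} [Countable ι] {a p : ι → ℝ}
    (hp : ∀ i, 0 < p i) (hγ : 0 < γ) (ht : 0 < t)
    (hsum : Summable fun i ↦ a i * (Gamma (p i) / Gamma (p i + γ) * t ^ (p i + γ - 1))) :
    riemannLiouville γ (fun s ↦ ∑' i, a i * s ^ (p i - 1)) t =
      ∑' i, a i * (Gamma (p i) / Gamma (p i + γ) * t ^ (p i + γ - 1)) := by
  have hterm (b : ℝ) (i : ι) : riemannLiouville γ (fun s ↦ b * s ^ (p i - 1)) t =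
      b * (Gamma (p i) / Gamma (p i + γ) * t ^ (p i + γ - 1)) := by
    rw [riemannLiouville_const_mul, riemannLiouville_rpow (hp i) hγ ht]
  have habs (i : ι) : riemannLiouville γ (fun s ↦ |a i * s ^ (p i - 1)|) t =
      |a i * (Gamma (p i) / Gamma (p i + γ) * t ^ (p i + γ - 1))| := by
    have hpos : 0 ≤ Gamma (p i) / Gamma (p i + γ) * t ^ (p i + γ - 1) :=
      mul_nonneg (div_pos (Gamma_pos_of_pos (hp i)) (Gamma_pos_of_pos (add_pos (hp i) hγ))).le
        (rpow_nonneg ht.le _)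
    rw [abs_mul, abs_of_nonneg hpos, ← hterm]
    refine riemannLiouville_congr γ ht.le fun s hs ↦ ?_
    simp only [abs_mul, abs_of_nonneg (rpow_nonneg hs.1.le (p i - 1))]
  rw [riemannLiouville_tsum hγ ht.le]
  · exact tsum_congr fun i ↦ hterm (a i) i
  · intro i
    simpa only [mul_left_comm] using
      (intervalIntegrable_sub_rpow_mul_rpow (hp i) hγ ht).const_mul (a i)
  · exact hsum.abs.congr fun i ↦ (habs i).symm

theorem riemannLiouville_rpow_mul_mittagLeffler₂ {α : ℝ} (hα : 0 < α) (hβ : 0 < β) (hγ : 0 < γ)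
    (c : ℝ) (ht : 0 < t) :
    riemannLiouville γ (fun s ↦ s ^ (β - 1) * mittagLeffler₂ α β (c * s ^ α)) t =
      t ^ (β + γ - 1) * mittagLeffler₂ α (β + γ) (c * t ^ α) := by
  have hp (k : ℕ) : 0 < α * k + β := by positivity
  have hterm (δ : ℝ) (k : ℕ) {s : ℝ} (hs : 0 < s) :
      s ^ (δ - 1) * ((c * s ^ α) ^ k / Gamma (α * k + δ)) =
        c ^ k / Gamma (α * k + δ) * s ^ (α * k + δ - 1) := by
    rw [add_sub_assoc, rpow_add hs, rpow_mul hs.le, rpow_natCast, mul_pow]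
    ring
  have hexpand : EqOn (fun s ↦ s ^ (β - 1) * mittagLeffler₂ α β (c * s ^ α))
      (fun s ↦ ∑' k : ℕ, c ^ k / Gamma (α * k + β) * s ^ (α * k + β - 1)) (Ioo 0 t) :=
    fun s hs ↦ tsum_mul_left.symm.trans (tsum_congr fun k ↦ hterm β k hs.1)
  have hcoeff (k : ℕ) :
      t ^ (β + γ - 1) * ((c * t ^ α) ^ k / Gamma (α * k + (β + γ))) =
        c ^ k / Gamma (α * k + β) *
          (Gamma (α * k + β) / Gamma (α * k + β + γ) * t ^ (α * k + β + γ - 1)) := by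
    rw [hterm (β + γ) k ht, ← mul_assoc, div_mul_div_cancel₀ (Gamma_pos_of_pos (hp k)).ne',
      add_assoc]
  have hsum := (summable_pow_div_Gamma hα (β + γ) (c * t ^ α)).mul_left (t ^ (β + γ - 1))
  rw [riemannLiouville_congr γ ht.le hexpand,
    riemannLiouville_tsum_mul_rpow hp hγ ht (hsum.congr hcoeff), mittagLeffler₂, ← tsum_mul_left]
  exact tsum_congr fun k ↦ (hcoeff k).symm

end RiemannLiouville

theorem caputo_deriv_mittagLeffler_general (α c : ℝ) (hα : α ∈ Ioo (0 : ℝ) 1) (t : ℝ)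
    (ht : 0 < t) :
    caputoDeriv α (fun s ↦ mittagLeffler α (c * s ^ α)) t = c * mittagLeffler α (c * t ^ α) := by
  have hderiv : EqOn (deriv fun s ↦ mittagLeffler α (c * s ^ α))
      (fun s ↦ c * (s ^ (α - 1) * mittagLeffler₂ α α (c * s ^ α))) (Ioo 0 t) :=
    fun s hs ↦ (hasDerivAt_mittagLeffler_const_mul_rpow hα.1 c hs.1).deriv
  rw [caputoDeriv_eq_riemannLiouville_deriv, riemannLiouville_congr _ ht.le hderiv,
    riemannLiouville_const_mul,
    riemannLiouville_rpow_mul_mittagLeffler₂ hα.1 hα.1 (sub_pos.2 hα.2) c ht,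
    add_sub_cancel, sub_self, rpow_zero, one_mul, mittagLeffler₂_one_right]

theorem caputo_deriv_mittagLeffler (α lam : ℝ) (hα : α ∈ Set.Ioo (0:ℝ) 1)
    (hlam : 0 < lam) (t : ℝ) (ht : 0 < t) :
    caputoDeriv α (fun s => mittagLeffler α (-lam * s ^ α)) t =
      -lam * mittagLeffler α (-lam * t ^ α) :=
  caputo_deriv_mittagLeffler_general α (-lam) hα t ht
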